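/- Let c ∈ [0,1), s = √(1−c²), and let f be defined by f(x) = (1/16)·( ((σ_3/64)x² + (c/4)x − s²)² − (1/16)(1 − σ_2 + 2σ_3)c²x² + (1/16)(2 − σ_1)x² − c(x − 8c) )² − (64 + u_1²u_2²u_3²x²)·( x/32 − c/8 − c³/8 + (σ_3/512)c x² )², with u_1 = √(2(2+√2)) − 1 − √2, u_2 = √(2+√2) − 1, u_3 = 1 + √2 − √(2+√2), σ_1 = (1−u_1²)+(1−u_2²)+(1−u_3²), σ_2 = (1−u_1²)(1−u_2²)+(1−u_1²)(1−u_3²)+(1−u_2²)(1−u_3²), σ_3 = (1−u_1²)(1−u_2²)(1−u_3²). Then f'(x) > 0 for all x ∈ (−(1−c)², 0), and f has exactly one zero on the interval [−(1−c)², 0]. -/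

import Mathlib

open Real

noncomputable def u1 : ℝ := Real.sqrt (2 * (2 + Real.sqrt 2)) - 1 - Real.sqrt 2

noncomputable def u2 : ℝ := Real.sqrt (2 + Real.sqrt 2) - 1

noncomputable def u3 : ℝ := 1 + Real.sqrt 2 - Real.sqrt (2 + Real.sqrt 2)

noncomputable def σ1 : ℝ := (1 - u1 ^ 2) + (1 - u2 ^ 2) + (1 - u3 ^ 2)

noncomputable def σ2 : ℝ :=
  (1 - u1 ^ 2) * (1 - u2 ^ 2) + (1 - u1 ^ 2) * (1 - u3 ^ 2) + (1 - u2 ^ 2) * (1 - u3 ^ 2)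

noncomputable def σ3 : ℝ := (1 - u1 ^ 2) * (1 - u2 ^ 2) * (1 - u3 ^ 2)

/-- The resolvent function `f` of the quartic G⁰ interpolation problem
(equation (6) of the paper). -/
noncomputable def quarticF (c s x : ℝ) : ℝ :=
  (1 / 16) * (((σ3 / 64) * x ^ 2 + (c / 4) * x - s ^ 2) ^ 2
      - (1 / 16) * (1 - σ2 + 2 * σ3) * c ^ 2 * x ^ 2
      + (1 / 16) * (2 - σ1) * x ^ 2 - c * (x - 8 * c)) ^ 2
    - (64 + u1 ^ 2 * u2 ^ 2 * u3 ^ 2 * x ^ 2)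
      * (x / 32 - c / 8 - c ^ 3 / 8 + (σ3 / 512) * c * x ^ 2) ^ 2

/-!
Put `m = σ3 / 64`, `n = (2 - σ1) / 16`, `k = (1 - σ2 + 2 σ3) / 16` and `p = u1 u2 u3 / 8`. With `P`
the polynomial whose square is the first term of `16 f` and `C = 4c(1 + c²) - x - 4mcx²`, the
resolvent satisfies `16 f = (P - C)(P + C) - p² (x C)²`. On `[-1, 0]` both factors `P ∓ C` and their
derivatives are sandwiched between quadratics and the derivatives of those. With `d = (1 - c)²`, on
`(-d, 0)` this gives `(P - C)' ≥ d`, `P - C < d²`, `P + C ≥ 1` and `-1 ≤ d (P + C)' < 0`, hence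
`((P - C)(P + C))' > d · 1 - d² · (1 / d) = 0`, while `(x C)²` is decreasing. The signs of `f` at
`-d` and `0` then locate the zero.
-/

theorem existsUnique_zero_of_deriv_pos {f : ℝ → ℝ} {a b : ℝ} (hab : a ≤ b)
    (hf : ContinuousOn f (Set.Icc a b)) (hf' : ∀ x ∈ Set.Ioo a b, 0 < deriv f x)
    (ha : f a ≤ 0) (hb : 0 ≤ f b) : ∃! x, x ∈ Set.Icc a b ∧ f x = 0 := by
  have hmono : StrictMonoOn f (Set.Icc a b) :=
    strictMonoOn_of_deriv_pos (convex_Icc a b) hf (by rwa [interior_Icc])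
  obtain ⟨x, hx, hx0⟩ := intermediate_value_Icc hab hf ⟨ha, hb⟩
  exact ⟨x, ⟨hx, hx0⟩, fun y hy => hmono.injOn hy.1 hx (hy.2.trans hx0.symm)⟩

/-- The shape shared by the two factors of the resolvent: a quadratic whose leading coefficient is
perturbed by the square `(m * x + r) ^ 2`. -/
def factorQuartic (a b e m r x : ℝ) : ℝ := a + b * x + x ^ 2 * (e + (m * x + r) ^ 2)

section FactorQuartic

variable {a b e m r x κ : ℝ}

theorem hasDerivAt_factorQuartic :
    HasDerivAt (factorQuartic a b e m r)
      (b + 2 * x * (e + 2 * (m * x) ^ 2 + 3 * r * (m * x) + r ^ 2)) x := by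
  have hid := hasDerivAt_id' x
  refine ((hid.const_mul b).const_add a).add
    ((hid.pow 2).mul ((((hid.const_mul m).add_const r).pow 2).const_add e)) |>.congr_deriv ?_
  simp only [Pi.pow_apply, Nat.cast_ofNat]
  ring

theorem le_factorQuartic (he : κ ≤ e) :
    a + b * x + κ * x ^ 2 ≤ factorQuartic a b e m r x := by
  have hκ : κ ≤ e + (m * x + r) ^ 2 := by linarith [sq_nonneg (m * x + r)]
  unfold factorQuartic
  linarith [mul_le_mul_of_nonneg_left hκ (sq_nonneg x)]

theorem deriv_factorQuartic_le (hx : x ≤ 0) (he : κ ≤ e - r ^ 2 / 8) :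
    deriv (factorQuartic a b e m r) x ≤ b + 2 * κ * x := by
  have hκ : κ ≤ e + 2 * (m * x) ^ 2 + 3 * r * (m * x) + r ^ 2 := by
    linarith [sq_nonneg (m * x + 3 / 4 * r)]
  rw [hasDerivAt_factorQuartic.deriv]
  linarith [mul_le_mul_of_nonpos_left hκ hx]

theorem mul_sq_le_sq (hx : x ∈ Set.Icc (-1) 0) : (m * x) ^ 2 ≤ m ^ 2 := by
  rw [mul_pow]
  exact mul_le_of_le_one_right (sq_nonneg m) (by nlinarith [hx.1, hx.2])

variable (hm : 0 ≤ m) (hr : 0 ≤ r) (hx : x ∈ Set.Icc (-1) 0)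
include hm hr hx

theorem factorQuartic_le (he : e + m ^ 2 + r ^ 2 ≤ κ) :
    factorQuartic a b e m r x ≤ a + b * x + κ * x ^ 2 := by
  have hκ : e + (m * x + r) ^ 2 ≤ κ := by
    have hcross : r * (m * x) ≤ 0 :=
      mul_nonpos_of_nonneg_of_nonpos hr (mul_nonpos_of_nonneg_of_nonpos hm hx.2)
    linarith [mul_sq_le_sq (m := m) hx]
  unfold factorQuartic
  linarith [mul_le_mul_of_nonneg_left hκ (sq_nonneg x)]

theorem le_deriv_factorQuartic (he : e + 2 * m ^ 2 + r ^ 2 ≤ κ) :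
    b + 2 * κ * x ≤ deriv (factorQuartic a b e m r) x := by
  have hκ : e + 2 * (m * x) ^ 2 + 3 * r * (m * x) + r ^ 2 ≤ κ := by
    have hcross : r * (m * x) ≤ 0 :=
      mul_nonpos_of_nonneg_of_nonpos hr (mul_nonpos_of_nonneg_of_nonpos hm hx.2)
    linarith [mul_sq_le_sq (m := m) hx]
  rw [hasDerivAt_factorQuartic.deriv]
  linarith [mul_le_mul_of_nonpos_left hκ hx.2]

end FactorQuartic

/-- Conditions on the coefficients `m`, `n`, `k` of the resolvent under which both of its factors
are controlled by quadratics on `[-1, 0]`. Only `add_two_mul_sq_le` depends on the actual values of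
`u1`, `u2`, `u3`; the other conditions hold for any three numbers in `[-1, 1]`. -/
structure ResolventCoeffBounds (m n k : ℝ) : Prop where
  m_nonneg : 0 ≤ m
  m_le : m ≤ 1 / 32
  le_n : -(1 / 16) ≤ n
  add_two_mul_sq_le : n + 2 * m ^ 2 ≤ 2 * m
  k_nonneg : 0 ≤ k
  k_le : k ≤ 1 / 16

/-- The part common to both factors `P ∓ C` of the constant `e` in `factorQuartic`. -/
def factorOffset (m n k c : ℝ) : ℝ := n - k * c ^ 2 - 2 * (1 - c ^ 2) * m

/-- The factor `P - C` of the resolvent. -/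
noncomputable def lowerFactor (m n k c : ℝ) : ℝ → ℝ :=
  factorQuartic ((1 - c) ^ 4) ((1 - c) ^ 2 * (1 + c / 2))
    (factorOffset m n k c + 4 * m * c) m (c / 4)

/-- The factor `P + C` of the resolvent. -/
noncomputable def upperFactor (m n k c : ℝ) : ℝ → ℝ :=
  factorQuartic ((1 + c) ^ 4) (-((1 + c) * (1 + (1 - c) * c / 2)))
    (factorOffset m n k c - 4 * m * c) m (c / 4)

/-- The polynomial `C`, half the difference of the two factors of the resolvent. -/
def correction (m c x : ℝ) : ℝ := 4 * c * (1 + c ^ 2) - x - 4 * m * c * x ^ 2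

/-- The resolvent with free coefficients, written with its difference of squares factored. -/
noncomputable def quarticResolvent (m n k p c x : ℝ) : ℝ :=
  1 / 16 * (lowerFactor m n k c x * upperFactor m n k c x - p ^ 2 * (x * correction m c x) ^ 2)

theorem quarticF_eq_quarticResolvent {c s : ℝ} (hs : s ^ 2 = 1 - c ^ 2) :
    quarticF c s =
      quarticResolvent (σ3 / 64) ((2 - σ1) / 16) ((1 - σ2 + 2 * σ3) / 16) (u1 * u2 * u3 / 8) c := by
  funext x
  unfold quarticF quarticResolvent lowerFactor upperFactor factorQuartic factorOffset correction
  rw [hs]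
  ring

section Factors

variable {m n k c x : ℝ}

theorem neg_one_sub_sq_mem_Icc (hc : c ∈ Set.Icc 0 1) : -(1 - c) ^ 2 ∈ Set.Icc (-1) 0 :=
  ⟨by nlinarith [hc.1, hc.2], neg_nonpos.2 (sq_nonneg (1 - c))⟩

theorem Ioo_neg_one_sub_sq_subset (hc : c ∈ Set.Icc 0 1) :
    Set.Ioo (-(1 - c) ^ 2) 0 ⊆ Set.Icc (-1) 0 :=
  Set.Ioo_subset_Icc_self.trans (Set.Icc_subset_Icc_left (neg_one_sub_sq_mem_Icc hc).1)

theorem one_le_mul_one_add (hc : c ∈ Set.Icc 0 1) : 1 ≤ (1 + c) * (1 + (1 - c) * c / 2) := by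
  nlinarith [hc.1, mul_nonneg hc.1 (sub_nonneg.2 hc.2)]

theorem differentiable_lowerFactor : Differentiable ℝ (lowerFactor m n k c) :=
  fun _ => hasDerivAt_factorQuartic.differentiableAt

theorem differentiable_upperFactor : Differentiable ℝ (upperFactor m n k c) :=
  fun _ => hasDerivAt_factorQuartic.differentiableAt

section Bounds

variable (h : ResolventCoeffBounds m n k) (hc : c ∈ Set.Icc 0 1)
include h hc

theorem factorOffset_add_le :
    factorOffset m n k c + 4 * m * c + 2 * m ^ 2 + (c / 4) ^ 2 ≤ c / 4 := by
  have hc2 : c ^ 2 ≤ c := by nlinarith [hc.1, hc.2]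
  have hmc : m * c ≤ 1 / 32 * c := mul_le_mul_of_nonneg_right h.m_le hc.1
  have hmc2 : m * c ^ 2 ≤ m * c := mul_le_mul_of_nonneg_left hc2 h.m_nonneg
  have hkc2 : 0 ≤ k * c ^ 2 := mul_nonneg h.k_nonneg (sq_nonneg c)
  unfold factorOffset
  linarith [h.add_two_mul_sq_le]

theorem factorOffset_sub_le :
    factorOffset m n k c - 4 * m * c + 2 * m ^ 2 + (c / 4) ^ 2 ≤ c / 4 := by
  linarith [factorOffset_add_le h hc, mul_nonneg h.m_nonneg hc.1]

theorem le_factorOffset_sub : -(1 / 4) ≤ factorOffset m n k c - 4 * m * c := by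
  have hkc2 : k * c ^ 2 ≤ k := mul_le_of_le_one_right h.k_nonneg (by nlinarith [hc.1, hc.2])
  have hmc : 0 ≤ m * (1 - c) ^ 2 := mul_nonneg h.m_nonneg (sq_nonneg _)
  unfold factorOffset
  linarith [h.m_le, h.le_n, h.k_le]

theorem lowerFactor_le (hx : x ∈ Set.Icc (-1) 0) :
    lowerFactor m n k c x ≤ (1 - c) ^ 4 + (1 - c) ^ 2 * (1 + c / 2) * x + c / 4 * x ^ 2 :=
  factorQuartic_le h.m_nonneg (by linarith [hc.1]) hx
    (by linarith [factorOffset_add_le h hc, sq_nonneg m])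

theorem lowerFactor_neg_one_sub_sq_nonpos : lowerFactor m n k c (-(1 - c) ^ 2) ≤ 0 := by
  have hle := lowerFactor_le h hc (neg_one_sub_sq_mem_Icc hc)
  have hdc : 0 ≤ (1 - c) ^ 4 * c := mul_nonneg (by positivity) hc.1
  linarith

theorem one_le_upperFactor (hx : x ∈ Set.Icc (-1) 0) : 1 ≤ upperFactor m n k c x := by
  have hslope := one_le_mul_one_add hc
  calc (1 : ℝ) ≤ (1 + c) ^ 4 + -((1 + c) * (1 + (1 - c) * c / 2)) * x + -(1 / 4) * x ^ 2 := by
        have hconst : 1 ≤ (1 + c) ^ 4 := one_le_pow₀ (by linarith [hc.1])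
        nlinarith [hx.1, hx.2]
    _ ≤ upperFactor m n k c x := le_factorQuartic (le_factorOffset_sub h hc)

variable (hx : x ∈ Set.Ioo (-(1 - c) ^ 2) 0)
include hx

theorem lowerFactor_lt : lowerFactor m n k c x < (1 - c) ^ 4 := by
  have hle := lowerFactor_le h hc (Ioo_neg_one_sub_sq_subset hc hx)
  have hlinear : (1 - c) ^ 2 * x < 0 := mul_neg_of_pos_of_neg (by linarith [hx.1, hx.2]) hx.2
  have hquadratic : c / 4 * x ^ 2 ≤ c / 4 * (-x * (1 - c) ^ 2) :=
    mul_le_mul_of_nonneg_left (by nlinarith [hx.1, hx.2]) (by linarith [hc.1])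
  linarith [mul_nonpos_of_nonneg_of_nonpos hc.1 hlinear.le]

theorem one_sub_sq_le_deriv_lowerFactor : (1 - c) ^ 2 ≤ deriv (lowerFactor m n k c) x :=
  calc (1 - c) ^ 2 ≤ (1 - c) ^ 2 * (1 + c / 2) + 2 * (c / 4) * x := by nlinarith [hc.1, hx.1]
    _ ≤ deriv (lowerFactor m n k c) x :=
      le_deriv_factorQuartic h.m_nonneg (by linarith [hc.1])
        (Ioo_neg_one_sub_sq_subset hc hx) (factorOffset_add_le h hc)

theorem deriv_upperFactor_neg : deriv (upperFactor m n k c) x < 0 := by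
  have hslope := one_le_mul_one_add hc
  calc deriv (upperFactor m n k c) x
      ≤ -((1 + c) * (1 + (1 - c) * c / 2)) + 2 * -(1 / 2) * x :=
        deriv_factorQuartic_le hx.2.le (by nlinarith [le_factorOffset_sub h hc, hc.1, hc.2])
    _ < 0 := by nlinarith [hx.1, hc.1, hc.2]

theorem neg_one_le_one_sub_sq_mul_deriv_upperFactor :
    -1 ≤ (1 - c) ^ 2 * deriv (upperFactor m n k c) x := by
  have hx1 := Ioo_neg_one_sub_sq_subset hc hx
  have hderiv : -((1 + c) * (1 + (1 - c) * c / 2)) + 2 * (c / 4) * x ≤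
      deriv (upperFactor m n k c) x :=
    le_deriv_factorQuartic h.m_nonneg (by linarith [hc.1]) hx1 (factorOffset_sub_le h hc)
  have hc2 : 0 ≤ c / 2 := div_nonneg hc.1 zero_le_two
  have hd0 : 0 ≤ 1 - c := sub_nonneg.2 hc.2
  have hcd : 0 ≤ (1 - c) * c := mul_nonneg hd0 hc.1
  have hconst : (1 - c) ^ 2 * ((1 + c) * (1 + (1 - c) * c / 2)) ≤ (1 - c) * (1 + c / 2) := by
    rw [← mul_assoc]
    exact mul_le_mul (by nlinarith [mul_nonneg hcd hc.1]) (by linarith [sq_nonneg c])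
      (by linarith) hd0
  have hlinear : (1 - c) ^ 2 * (c / 2 * -x) ≤ c / 2 :=
    calc (1 - c) ^ 2 * (c / 2 * -x) ≤ c / 2 * -x :=
          mul_le_of_le_one_left (mul_nonneg hc2 (neg_nonneg.2 hx1.2)) (by nlinarith [hc.1])
      _ ≤ c / 2 := mul_le_of_le_one_right hc2 (by linarith [hx1.1])
  linarith [mul_le_mul_of_nonneg_left hderiv (sq_nonneg (1 - c)), sq_nonneg c]

theorem deriv_lowerFactor_mul_upperFactor_pos :
    0 < deriv (fun x => lowerFactor m n k c x * upperFactor m n k c x) x := by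
  rw [deriv_fun_mul differentiable_lowerFactor.differentiableAt
    differentiable_upperFactor.differentiableAt]
  have hrise : (1 - c) ^ 2 ≤ deriv (lowerFactor m n k c) x * upperFactor m n k c x :=
    (one_sub_sq_le_deriv_lowerFactor h hc hx).trans <| le_mul_of_one_le_right
      ((sq_nonneg _).trans (one_sub_sq_le_deriv_lowerFactor h hc hx))
      (one_le_upperFactor h hc (Ioo_neg_one_sub_sq_subset hc hx))
  have hfall : -(1 - c) ^ 2 < lowerFactor m n k c x * deriv (upperFactor m n k c) x :=
    calc -(1 - c) ^ 2 ≤ (1 - c) ^ 4 * deriv (upperFactor m n k c) x := by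
          linarith [mul_le_mul_of_nonneg_left
            (neg_one_le_one_sub_sq_mul_deriv_upperFactor h hc hx) (sq_nonneg (1 - c))]
      _ < lowerFactor m n k c x * deriv (upperFactor m n k c) x :=
        mul_lt_mul_of_neg_right (lowerFactor_lt h hc hx) (deriv_upperFactor_neg h hc hx)
  linarith

end Bounds

theorem hasDerivAt_mul_correction :
    HasDerivAt (fun x => x * correction m c x)
      (4 * c * (1 + c ^ 2) - 2 * x - 12 * m * c * x ^ 2) x := by
  have hid := hasDerivAt_id' x
  refine hid.mul ((hid.const_sub (4 * c * (1 + c ^ 2))).sub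
    ((hid.pow 2).const_mul (4 * m * c))) |>.congr_deriv ?_
  simp only [Pi.sub_apply, Pi.pow_apply, Nat.cast_ofNat]
  ring

theorem differentiable_sq_mul_correction :
    Differentiable ℝ fun x => (x * correction m c x) ^ 2 :=
  fun _ => (hasDerivAt_mul_correction.fun_pow 2).differentiableAt

theorem deriv_sq_mul_correction_nonpos (hm0 : 0 ≤ m) (hm : m ≤ 1 / 32) (hc : c ∈ Set.Icc 0 1)
    (hx : x ∈ Set.Icc (-1) 0) : deriv (fun x => (x * correction m c x) ^ 2) x ≤ 0 := by
  have hmcx : m * c * x ^ 2 ≤ 1 / 32 * -x :=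
    mul_le_mul (by nlinarith [hc.1, hc.2]) (by nlinarith [hx.1, hx.2]) (sq_nonneg x) (by norm_num)
  have hc3 : 0 ≤ c * (1 + c ^ 2) := mul_nonneg hc.1 (by positivity)
  have hcorrection : 0 ≤ correction m c x := by
    unfold correction
    linarith [hx.2]
  have hderiv : 0 ≤ 4 * c * (1 + c ^ 2) - 2 * x - 12 * m * c * x ^ 2 := by linarith [hx.2]
  rw [(hasDerivAt_mul_correction.fun_pow 2).deriv]
  simp only [Nat.cast_ofNat, Nat.add_one_sub_one, pow_one]
  linarith [mul_nonneg (mul_nonneg (neg_nonneg.2 hx.2) hcorrection) hderiv]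

end Factors

section Resolvent

variable {m n k p c x : ℝ}

theorem hasDerivAt_quarticResolvent :
    HasDerivAt (quarticResolvent m n k p c)
      (1 / 16 * (deriv (fun x => lowerFactor m n k c x * upperFactor m n k c x) x
        - p ^ 2 * deriv (fun x => (x * correction m c x) ^ 2) x)) x :=
  (((differentiable_lowerFactor.fun_mul differentiable_upperFactor) x).hasDerivAt.fun_sub
    ((differentiable_sq_mul_correction x).hasDerivAt.const_mul _)).const_mul _

theorem continuous_quarticResolvent : Continuous (quarticResolvent m n k p c) :=
  continuous_iff_continuousAt.2 fun _ => hasDerivAt_quarticResolvent.continuousAt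

variable (h : ResolventCoeffBounds m n k) (hc : c ∈ Set.Icc 0 1)
include h hc

theorem deriv_quarticResolvent_pos (hx : x ∈ Set.Ioo (-(1 - c) ^ 2) 0) :
    0 < deriv (quarticResolvent m n k p c) x := by
  have hproduct := deriv_lowerFactor_mul_upperFactor_pos h hc hx
  have hsquare := deriv_sq_mul_correction_nonpos h.m_nonneg h.m_le hc
    (Ioo_neg_one_sub_sq_subset hc hx)
  rw [hasDerivAt_quarticResolvent.deriv]
  linarith [mul_nonpos_of_nonneg_of_nonpos (sq_nonneg p) hsquare]

theorem quarticResolvent_neg_one_sub_sq_nonpos : quarticResolvent m n k p c (-(1 - c) ^ 2) ≤ 0 := by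
  have hupper := one_le_upperFactor h hc (neg_one_sub_sq_mem_Icc hc)
  have hproduct := mul_nonpos_of_nonpos_of_nonneg (lowerFactor_neg_one_sub_sq_nonpos h hc)
    (zero_le_one.trans hupper)
  unfold quarticResolvent
  linarith [mul_nonneg (sq_nonneg p)
    (sq_nonneg (-(1 - c) ^ 2 * correction m c (-(1 - c) ^ 2)))]

omit h hc in
theorem quarticResolvent_zero_nonneg : 0 ≤ quarticResolvent m n k p c 0 := by
  have hzero : quarticResolvent m n k p c 0 = 1 / 16 * ((1 - c) ^ 4 * (1 + c) ^ 4) := by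
    simp [quarticResolvent, lowerFactor, upperFactor, factorQuartic]
  rw [hzero]
  positivity

theorem existsUnique_quarticResolvent_eq_zero :
    ∃! x, x ∈ Set.Icc (-(1 - c) ^ 2) 0 ∧ quarticResolvent m n k p c x = 0 :=
  existsUnique_zero_of_deriv_pos (neg_nonpos.2 (sq_nonneg (1 - c)))
    continuous_quarticResolvent.continuousOn (fun _ => deriv_quarticResolvent_pos h hc)
    (quarticResolvent_neg_one_sub_sq_nonpos h hc) quarticResolvent_zero_nonneg

end Resolvent

theorem ResolventCoeffBounds.of_mem_Icc {a b e : ℝ} (ha : a ∈ Set.Icc 0 1) (hb : b ∈ Set.Icc 0 1)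
    (he : e ∈ Set.Icc 0 1) (habe : 2 - (a + b + e) + (a * b * e) ^ 2 / 128 ≤ a * b * e / 2) :
    ResolventCoeffBounds (a * b * e / 64) ((2 - (a + b + e)) / 16)
      ((1 - (a * b + a * e + b * e) + 2 * (a * b * e)) / 16) := by
  have hab : 0 ≤ a * b := mul_nonneg ha.1 hb.1
  have habe0 : 0 ≤ a * b * e := mul_nonneg hab he.1
  have habe_le_ab : a * b * e ≤ a * b := mul_le_of_le_one_right hab he.2
  have habe_le_ae : a * b * e ≤ a * e :=
    mul_le_mul_of_nonneg_right (mul_le_of_le_one_right ha.1 hb.2) he.1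
  have hab1 : a * b ≤ 1 := mul_le_one₀ ha.2 hb.1 hb.2
  -- This is the probability that at most one of three independent events occurs.
  have hk : 0 ≤ 1 - (a * b + a * e + b * e) + 2 * (a * b * e) := by
    obtain ⟨ha0, ha1⟩ := ha.imp_right sub_nonneg.2
    obtain ⟨hb0, hb1⟩ := hb.imp_right sub_nonneg.2
    obtain ⟨he0, he1⟩ := he.imp_right sub_nonneg.2
    calc 0 ≤ (1 - a) * (1 - b) * (1 - e) + a * (1 - b) * (1 - e) + (1 - a) * b * (1 - e)
          + (1 - a) * (1 - b) * e := by positivity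
      _ = 1 - (a * b + a * e + b * e) + 2 * (a * b * e) := by ring
  refine ⟨by linarith, by linarith, by linarith [ha.2, hb.2, he.2], by linarith, by linarith, ?_⟩
  linarith [mul_nonneg hb.1 he.1]

theorem sqrt_two_mem_Icc : √2 ∈ Set.Icc (1414 / 1000) (14143 / 10000) :=
  ⟨Real.le_sqrt_of_sq_le (by norm_num), Real.sqrt_le_iff.2 (by norm_num)⟩

theorem sqrt_two_add_sqrt_two_mem_Icc : √(2 + √2) ∈ Set.Icc (18475 / 10000) (1848 / 1000) := by
  obtain ⟨hlower, hupper⟩ := sqrt_two_mem_Icc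
  exact ⟨Real.le_sqrt_of_sq_le (by linarith), Real.sqrt_le_iff.2 ⟨by norm_num, by linarith⟩⟩

theorem u1_mem_Icc : u1 ∈ Set.Icc 0 (1 / 5) := by
  obtain ⟨hlower, hupper⟩ := sqrt_two_mem_Icc
  have hroot_lower : 1 + √2 ≤ √(2 * (2 + √2)) :=
    Real.le_sqrt_of_sq_le (by linarith [Real.sq_sqrt (zero_le_two (α := ℝ))])
  have hroot_upper : √(2 * (2 + √2)) ≤ 2614 / 1000 :=
    Real.sqrt_le_iff.2 ⟨by norm_num, by linarith⟩
  unfold u1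
  constructor <;> linarith

theorem u2_mem_Icc : u2 ∈ Set.Icc 0 (848 / 1000) := by
  obtain ⟨hlower, hupper⟩ := sqrt_two_add_sqrt_two_mem_Icc
  unfold u2
  constructor <;> linarith

theorem u3_mem_Icc : u3 ∈ Set.Icc 0 (567 / 1000) := by
  obtain ⟨hlower, hupper⟩ := sqrt_two_mem_Icc
  obtain ⟨hroot_lower, hroot_upper⟩ := sqrt_two_add_sqrt_two_mem_Icc
  unfold u3
  constructor <;> linarith

theorem one_sub_sq_mem_Icc {u b : ℝ} (hu : u ∈ Set.Icc 0 b) : 1 - u ^ 2 ∈ Set.Icc (1 - b ^ 2) 1 :=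
  ⟨sub_le_sub_left (pow_le_pow_left₀ hu.1 hu.2 2) 1, sub_le_self 1 (sq_nonneg u)⟩

theorem resolventCoeffBounds_σ :
    ResolventCoeffBounds (σ3 / 64) ((2 - σ1) / 16) ((1 - σ2 + 2 * σ3) / 16) := by
  have h1 := one_sub_sq_mem_Icc u1_mem_Icc
  have h2 := one_sub_sq_mem_Icc u2_mem_Icc
  have h3 := one_sub_sq_mem_Icc u3_mem_Icc
  have h1_unit : 1 - u1 ^ 2 ∈ Set.Icc 0 1 := Set.Icc_subset_Icc_left (by norm_num) h1
  have h2_unit : 1 - u2 ^ 2 ∈ Set.Icc 0 1 := Set.Icc_subset_Icc_left (by norm_num) h2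
  have h3_unit : 1 - u3 ^ 2 ∈ Set.Icc 0 1 := Set.Icc_subset_Icc_left (by norm_num) h3
  have hσ1 : 1915 / 1000 ≤ σ1 := by
    unfold σ1
    linarith [h1.1, h2.1, h3.1]
  have hσ3 : 175 / 1000 ≤ σ3 :=
    calc (175 / 1000 : ℝ)
        ≤ (1 - (1 / 5) ^ 2) * (1 - (848 / 1000) ^ 2) * (1 - (567 / 1000) ^ 2) := by norm_num
      _ ≤ σ3 := mul_le_mul (mul_le_mul h1.1 h2.1 (by norm_num) h1_unit.1) h3.1 (by norm_num)
          (mul_nonneg h1_unit.1 h2_unit.1)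
  have hσ3_le : σ3 ≤ 1 := mul_le_one₀ (mul_le_one₀ h1.2 h2_unit.1 h2.2) h3_unit.1 h3.2
  have hσ : 2 - σ1 + σ3 ^ 2 / 128 ≤ σ3 / 2 := by
    have hσ3_sq : σ3 ^ 2 ≤ σ3 := pow_le_of_le_one (by linarith) hσ3_le two_ne_zero
    linarith
  exact .of_mem_Icc h1_unit h2_unit h3_unit hσ

/-- Lemma 5 of the paper: the resolvent `f` satisfies `f'(x) > 0` on `(−(1−c)², 0)` and
has exactly one zero on `[−(1−c)², 0]`. -/
theorem stmt_18 (c : ℝ) (hc : c ∈ Set.Ico (0 : ℝ) 1) (s : ℝ)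
    (hs : s = Real.sqrt (1 - c ^ 2)) :
    (∀ x ∈ Set.Ioo (-(1 - c) ^ 2) (0 : ℝ), 0 < deriv (quarticF c s) x) ∧
    (∃! x : ℝ, x ∈ Set.Icc (-(1 - c) ^ 2) (0 : ℝ) ∧ quarticF c s x = 0) := by
  have hs2 : s ^ 2 = 1 - c ^ 2 := by
    rw [hs, Real.sq_sqrt (by nlinarith [hc.1, hc.2])]
  have hcIcc : c ∈ Set.Icc 0 1 := Set.Ico_subset_Icc_self hc
  rw [quarticF_eq_quarticResolvent hs2]
  exact ⟨fun _ => deriv_quarticResolvent_pos resolventCoeffBounds_σ hcIcc,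
    existsUnique_quarticResolvent_eq_zero resolventCoeffBounds_σ hcIcc⟩
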